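/- Let G be a 2-vertex-connected simple graph with minimum degree at least 3, and let D be an open nice ear-decomposition of G with exactly φ(G) even ears. Let H be the spanning subgraph of G whose edge set is the union of the edge sets of the nontrivial ears of D. Then H is a 2-vertex-connected spanning subgraph of G with |E(H)| ≤ (17/12)·OPT_2VC(G). -/

import Mathlib

open SimpleGraph

variable {V : Type*}

/-- An *ear* of a graph `G`: a walk of length at least `1` whose two endpoints may
coincide, but all of whose other vertices are distinct (from each other and from the
endpoints); i.e. the walk is an (open) path, or a cycle when the endpoints coincide. -/
structure Ear (G : SimpleGraph V) where
  a : V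
  b : V
  walk : G.Walk a b
  length_pos : 1 ≤ walk.length
  ear : (a ≠ b ∧ walk.IsPath) ∨ (∃ h : a = b, (walk.copy rfl h.symm).IsCycle)

namespace Ear

variable {G : SimpleGraph V}

/-- The set of vertices of an ear. -/
def vertices (P : Ear G) : Set V := {v | v ∈ P.walk.support}

/-- The (set of) endpoints of an ear. -/
def endpoints (P : Ear G) : Set V := {P.a, P.b}

/-- The set `in(P)` of internal vertices of an ear. -/
def internal (P : Ear G) : Set V := P.vertices \ P.endpoints

/-- The internal vertices of an ear, as a `Finset`. -/
def internalFinset [DecidableEq V] (P : Ear G) : Finset V :=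
  P.walk.support.toFinset \ {P.a, P.b}

/-- The list of edges of an ear. -/
def edges (P : Ear G) : List (Sym2 V) := P.walk.edges

/-- A *trivial* ear has a single edge. -/
def IsTrivial (P : Ear G) : Prop := P.walk.length = 1

/-- A *short* ear has `2` or `3` edges. -/
def IsShort (P : Ear G) : Prop := P.walk.length = 2 ∨ P.walk.length = 3

/-- A *long* ear has at least `4` edges. -/
def IsLong (P : Ear G) : Prop := 4 ≤ P.walk.length

/-- An *open* ear has distinct endpoints. -/
def IsOpen (P : Ear G) : Prop := P.a ≠ P.b

end Ear

/-- The trivial ear corresponding to a single edge `wy` of `G`. -/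
def trivialEar (G : SimpleGraph V) {w y : V} (h : G.Adj w y) : Ear G where
  a := w
  b := y
  walk := SimpleGraph.Walk.cons h SimpleGraph.Walk.nil
  length_pos := by simp
  ear := Or.inl ⟨h.ne, by simp [h.ne]⟩

/-- The set of vertices appearing in the root or in the first `i` ears (those with
index `< i`) of a putative ear-decomposition. -/
def priorVerts {G : SimpleGraph V} (root : V) (ears : List (Ear G)) (i : ℕ) : Set V :=
  insert root {v | ∃ j : Fin ears.length, (j : ℕ) < i ∧ v ∈ (ears.get j).vertices}

/-- An *ear-decomposition* of `G`: a root vertex `P₀` together with a sequence of ears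
`P₁, …, P_k` such that each ear shares exactly its endpoints with the set of vertices
appearing earlier, and every edge of `G` lies in exactly one ear. -/
structure EarDecomp (G : SimpleGraph V) where
  root : V
  ears : List (Ear G)
  endpoints_sub : ∀ i : Fin ears.length,
    (ears.get i).endpoints ⊆ priorVerts root ears (i : ℕ)
  internal_new : ∀ i : Fin ears.length,
    (ears.get i).internal ∩ priorVerts root ears (i : ℕ) = ∅
  edge_cover : ∀ e ∈ G.edgeSet, ∃! i : Fin ears.length, e ∈ (ears.get i).edges

namespace EarDecomp

variable {G : SimpleGraph V}

/-- An ear-decomposition is *open* if every ear except the first one is open. -/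
def IsOpen (D : EarDecomp G) : Prop :=
  ∀ i : Fin D.ears.length, 1 ≤ (i : ℕ) → (D.ears.get i).IsOpen

/-- The number of even ears of an ear-decomposition. -/
def evenEars (D : EarDecomp G) : ℕ :=
  D.ears.countP fun P => decide (Even P.walk.length)

/-- The ear with index `i` is *pendant*: it is nontrivial, and no other nontrivial ear
has an endpoint among its internal vertices. -/
def IsPendant (D : EarDecomp G) (i : Fin D.ears.length) : Prop :=
  ¬ (D.ears.get i).IsTrivial ∧
  ∀ j : Fin D.ears.length, j ≠ i → ¬ (D.ears.get j).IsTrivial →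
    (D.ears.get j).a ∉ (D.ears.get i).internal ∧ (D.ears.get j).b ∉ (D.ears.get i).internal

/-- A *nice* ear-decomposition: open, all short ears are pendant, and no edge of `G`
connects internal vertices of two different short ears. -/
def IsNice (D : EarDecomp G) : Prop :=
  D.IsOpen ∧
  (∀ i : Fin D.ears.length, (D.ears.get i).IsShort → D.IsPendant i) ∧
  (∀ i j : Fin D.ears.length, i ≠ j → (D.ears.get i).IsShort → (D.ears.get j).IsShort →
    ∀ u ∈ (D.ears.get i).internal, ∀ v ∈ (D.ears.get j).internal, ¬ G.Adj u v)

/-- The number `π` of pendant ears of an ear-decomposition. -/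
noncomputable def numPendant (D : EarDecomp G) : ℕ :=
  letI := Classical.decPred fun i : Fin D.ears.length => D.IsPendant i
  (Finset.univ.filter fun i : Fin D.ears.length => D.IsPendant i).card

/-- The set `E'` of edges lying in nontrivial ears of an ear-decomposition. -/
noncomputable def nontrivialEdges [DecidableEq V] (D : EarDecomp G) : Finset (Sym2 V) :=
  letI := Classical.decPred fun i : Fin D.ears.length => ¬ (D.ears.get i).IsTrivial
  (Finset.univ.filter fun i : Fin D.ears.length => ¬ (D.ears.get i).IsTrivial).biUnion
    fun i => (D.ears.get i).edges.toFinset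

/-- The eardrum `M` arising from the pendant short ears of an ear-decomposition: for each
pendant `2`-ear its internal vertex, and for each pendant `3`-ear the pair of its internal
vertices (joined by an edge). -/
noncomputable def eardrum [DecidableEq V] (D : EarDecomp G) : Finset (Finset V) :=
  letI := Classical.decPred fun i : Fin D.ears.length =>
    (D.ears.get i).IsShort ∧ D.IsPendant i
  ((Finset.univ.filter fun i : Fin D.ears.length =>
      (D.ears.get i).IsShort ∧ D.IsPendant i).image
    fun i => (D.ears.get i).internalFinset)

/-- The set `V_I` of internal vertices of the non-pendant ears (including the root). -/
noncomputable def VI [DecidableEq V] (D : EarDecomp G) : Finset V :=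
  letI := Classical.decPred fun i : Fin D.ears.length => D.IsPendant i
  insert D.root ((Finset.univ.filter fun i : Fin D.ears.length => ¬ D.IsPendant i).biUnion
    fun i => (D.ears.get i).internalFinset)

end EarDecomp

/-- `φ(G)`: the minimum number of even ears over all ear-decompositions of `G`. -/
noncomputable def phi (G : SimpleGraph V) : ℕ :=
  sInf {n | ∃ D : EarDecomp G, D.evenEars = n}

/-- A graph is 2-vertex-connected if it has at least `3` vertices and deleting any single
vertex leaves a connected graph. -/
def TwoVertexConnected {W : Type*} (G : SimpleGraph W) : Prop :=
  3 ≤ Nat.card W ∧ ∀ v : W, (G.induce ({v}ᶜ : Set W)).Connected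

/-- `OPT_2VC(G)`: the minimum number of edges of a 2-vertex-connected spanning subgraph. -/
noncomputable def OPT2VC {W : Type*} (G : SimpleGraph W) : ℕ :=
  sInf {n | ∃ H : SimpleGraph W, H ≤ G ∧ TwoVertexConnected H ∧ H.edgeSet.ncard = n}

/-- An *eardrum* in `G`: a set of pairwise vertex-disjoint subgraphs, each consisting of a
single vertex or a single edge (encoded by their vertex sets). -/
def IsEardrum [DecidableEq V] (G : SimpleGraph V) (M : Finset (Finset V)) : Prop :=
  (∀ f ∈ M, (∃ v, f = {v}) ∨ (∃ u v, G.Adj u v ∧ f = {u, v})) ∧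
  ∀ f ∈ M, ∀ g ∈ M, f ≠ g → Disjoint f g

/-- `V(M)`: the set of vertices of the members of an eardrum. -/
def eardrumVerts (M : Finset (Finset V)) : Set V := {v | ∃ f ∈ M, v ∈ f}

/-- An *earmuff* for the eardrum `M`: a collection of paths `P_f`, for `f` in a subset
`F ⊆ M` (here given as a duplicate-free list of pairs `(f, P_f)`), such that each `P_f` is
a path whose set of internal vertices is exactly the vertex set of `f` (containing the
edge of `f` when `f` is an edge), whose two distinct endpoints lie outside `V(M)`, and
such that the union of all the paths is a forest. -/
structure Earmuff (G : SimpleGraph V) (M : Finset (Finset V)) where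
  pairs : List (Finset V × Ear G)
  nodup_fst : (pairs.map Prod.fst).Nodup
  mem_M : ∀ pr ∈ pairs, pr.1 ∈ M
  is_path : ∀ pr ∈ pairs, pr.2.a ≠ pr.2.b ∧ pr.2.walk.IsPath
  internal_eq : ∀ pr ∈ pairs, pr.2.internal = ↑pr.1
  edge_mem : ∀ pr ∈ pairs, ∀ u v : V, u ∈ pr.1 → v ∈ pr.1 → u ≠ v → s(u, v) ∈ pr.2.edges
  ends_outside : ∀ pr ∈ pairs, pr.2.a ∉ eardrumVerts M ∧ pr.2.b ∉ eardrumVerts M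
  forest : (SimpleGraph.fromEdgeSet {e : Sym2 V | ∃ pr ∈ pairs, e ∈ pr.2.edges}).IsAcyclic

/-- `µ(G, M)`: the maximum size of an earmuff for `M` in `G`. -/
noncomputable def mu (G : SimpleGraph V) (M : Finset (Finset V)) : ℕ :=
  sSup {n | ∃ em : Earmuff G M, em.pairs.length = n}

/-!
Write `n = |V|`, let `E'` be the set of edges of the nontrivial ears of `D`, and let `H` be any
2-vertex-connected spanning subgraph of `G`.

* An ear of length `l` adds `l - 1` vertices, so the lengths minus one sum to `n - 1` over all
  ears. In any ear-decomposition an ear contributes at least `l - 1`, and at least `l` if it is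
  even, to the number of nontrivial edges, which is therefore at least `n - 1 + φ(G)`. Since `H`
  has an ear-decomposition into nontrivial ears plus trivial ones, and adding the remaining edges
  of `G` as trivial ears gives one of `G`, we get `n - 1 + φ(G) ≤ |E(H)|`.
* Every vertex has degree at least two in `H`, so at least `l` edges of `H` meet the interior of a
  short ear of length `l`. As no edge joins the interiors of two short ears, these edges are
  distinct for distinct short ears, and the lengths of the short ears of `D` sum to at most
  `|E(H)|`.

A nontrivial ear of length `l` satisfies `12 l ≤ 15 (l - 1 + [l even]) + 2 l [l ≤ 3]`; summing
gives `12 |E'| ≤ 15 (n - 1 + φ(G)) + 2 |E(H)| ≤ 17 |E(H)|`.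

Attaching an open ear to a vertex set that stays connected after the removal of any single vertex
preserves this property, and trivial ears add no vertices; hence `E'` is 2-vertex-connected.
-/

section ReachableAvoiding

/-- `ReachableAvoiding H v x y`: some walk of `H` from `x` to `y` misses `v`. This is
reachability in `H - v`, phrased in `H` itself so that no subtypes appear. -/
def ReachableAvoiding (H : SimpleGraph V) (v x y : V) : Prop :=
  ∃ p : H.Walk x y, v ∉ p.support

namespace ReachableAvoiding

variable {H : SimpleGraph V} {v x y z : V}

theorem refl (hx : x ≠ v) : ReachableAvoiding H v x x :=
  ⟨Walk.nil, by simpa using hx.symm⟩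

theorem symm : ReachableAvoiding H v x y → ReachableAvoiding H v y x
  | ⟨p, hp⟩ => ⟨p.reverse, by simpa using hp⟩

theorem trans : ReachableAvoiding H v x y → ReachableAvoiding H v y z → ReachableAvoiding H v x z
  | ⟨p, hp⟩, ⟨q, hq⟩ => ⟨p.append q, by simp [Walk.mem_support_append_iff, hp, hq]⟩

theorem ne_right : ReachableAvoiding H v x y → y ≠ v
  | ⟨p, hp⟩, h => hp (h ▸ p.end_mem_support)

end ReachableAvoiding

variable {H : SimpleGraph V} {v a b x y : V}

theorem reachableAvoiding_iff_induce_reachable (hx : x ∈ ({v}ᶜ : Set V)) (hy : y ∈ ({v}ᶜ : Set V)) :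
    ReachableAvoiding H v x y ↔ (H.induce {v}ᶜ).Reachable ⟨x, hx⟩ ⟨y, hy⟩ := by
  constructor
  · rintro ⟨p, hp⟩
    exact ⟨p.induce _ fun z hz (hzv : z = v) => hp (hzv ▸ hz)⟩
  · rintro ⟨p⟩
    refine ⟨p.map (Embedding.induce _).toHom, fun hv => ?_⟩
    obtain ⟨z, -, hz⟩ := List.mem_map.mp (Walk.support_map _ p ▸ hv)
    exact z.2 hz

theorem reachableAvoiding_start_or_end_of_isPath {p : H.Walk a b} (hp : p.IsPath)
    (hx : x ∈ p.support) (hxv : x ≠ v) :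
    ReachableAvoiding H v x a ∨ ReachableAvoiding H v x b := by
  classical
  by_cases htake : v ∈ (p.takeUntil x hx).support
  · refine .inr ⟨p.dropUntil x hx, fun hdrop => ?_⟩
    have hnodup := hp.support_nodup
    rw [← p.take_spec hx, Walk.support_append] at hnodup
    exact List.disjoint_of_nodup_append hnodup htake
      (((Walk.mem_support_iff _).mp hdrop).resolve_left hxv.symm)
  · exact .inl (.symm ⟨_, htake⟩)

theorem reachableAvoiding_of_isCycle {c : H.Walk a a} (hc : c.IsCycle) (hx : x ∈ c.support)
    (hy : y ∈ c.support) (hxv : x ≠ v) (hyv : y ≠ v) : ReachableAvoiding H v x y := by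
  classical
  have hy' : y ∈ (c.rotate x hx).support := (c.mem_support_rotate_iff x hx).mpr hy
  by_cases htake : v ∈ ((c.rotate x hx).takeUntil y hy').support
  · refine .symm ⟨(c.rotate x hx).dropUntil y hy', fun hdrop => ?_⟩
    have hnodup := (hc.rotate hx).support_nodup
    rw [← (c.rotate x hx).take_spec hy', Walk.tail_support_append] at hnodup
    exact List.disjoint_of_nodup_append hnodup
      (((Walk.mem_support_iff _).mp htake).resolve_left hxv.symm)
      (((Walk.mem_support_iff _).mp hdrop).resolve_left hyv.symm)
  · exact ⟨_, htake⟩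

theorem twoVertexConnected_iff_reachableAvoiding : TwoVertexConnected H ↔
    3 ≤ Nat.card V ∧ ∀ v x y, x ≠ v → y ≠ v → ReachableAvoiding H v x y := by
  refine and_congr_right fun hcard => forall_congr' fun v => ?_
  have : Nontrivial V := (Nat.card_pos_iff.mp (by omega)).2.one_lt_card_iff_nontrivial.mp (by omega)
  obtain ⟨w, hw⟩ := exists_ne v
  constructor
  · intro h x y hx hy
    exact (reachableAvoiding_iff_induce_reachable hx hy).mpr (h.preconnected _ _)
  · intro h
    have : Nonempty ({v}ᶜ : Set V) := ⟨⟨w, hw⟩⟩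
    exact ⟨fun x y => (reachableAvoiding_iff_induce_reachable x.2 y.2).mp (h x y x.2 y.2)⟩

end ReachableAvoiding

namespace TwoVertexConnected

variable {H : SimpleGraph V}

theorem finite (h : TwoVertexConnected H) : Finite V :=
  Nat.finite_of_card_ne_zero (by have := h.1; omega)

theorem nontrivial (h : TwoVertexConnected H) : Nontrivial V := by
  have := h.finite
  exact Finite.one_lt_card_iff_nontrivial.mp (by have := h.1; omega)

theorem exists_ne_ne (h : TwoVertexConnected H) (x y : V) : ∃ z, z ≠ x ∧ z ≠ y := by
  have := h.finite
  exact Cardinal.exists_ne_ne_of_three_le (by rw [← Nat.cast_card]; exact_mod_cast h.1) x y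

theorem preconnected (h : TwoVertexConnected H) : H.Preconnected := fun x y => by
  obtain ⟨z, hzx, hzy⟩ := h.exists_ne_ne x y
  obtain ⟨p, -⟩ := (twoVertexConnected_iff_reachableAvoiding.mp h).2 z x y hzx.symm hzy.symm
  exact ⟨p⟩

theorem exists_adj_ne (h : TwoVertexConnected H) {u x : V} (hux : u ≠ x) :
    ∃ y, y ≠ x ∧ H.Adj u y := by
  obtain ⟨z, hzu, hzx⟩ := h.exists_ne_ne u x
  obtain ⟨p, hp⟩ := (twoVertexConnected_iff_reachableAvoiding.mp h).2 x u z hux hzx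
  cases p with
  | nil => exact absurd rfl hzu
  | cons hadj q => exact ⟨_, fun hx => hp (by simp [← hx]), hadj⟩

theorem two_le_ncard_incidenceSet (h : TwoVertexConnected H) (u : V) :
    2 ≤ (H.incidenceSet u).ncard := by
  have := h.finite
  have := h.nontrivial
  obtain ⟨y, hy⟩ := h.preconnected.exists_adj_of_nontrivial u
  obtain ⟨z, hzy, hz⟩ := h.exists_adj_ne hy.ne
  refine (Set.one_lt_ncard_iff).mpr ⟨s(u, y), s(u, z), ?_, ?_, by simpa [hz.ne] using hzy.symm⟩
  · exact (H.mem_incidenceSet u y).mpr hy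
  · exact (H.mem_incidenceSet u z).mpr hz

end TwoVertexConnected

theorem ncard_setOf_mem_list {α : Type*} {l : List α} (hl : l.Nodup) :
    {x | x ∈ l}.ncard = l.length := by
  classical
  rw [← List.coe_toFinset, Set.ncard_coe_finset, List.toFinset_card_of_nodup hl]

namespace Ear

variable {G H : SimpleGraph V} (P : Ear G)

/-- `P.AttachesTo S`: the ear `P` shares exactly its endpoints with `S`. -/
def AttachesTo (S : Set V) : Prop := P.vertices ∩ S = P.endpoints

/-- An ear of a subgraph, seen as an ear of the ambient graph. -/
def mapLe (h : H ≤ G) (P : Ear H) : Ear G where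
  a := P.a
  b := P.b
  walk := P.walk.mapLe h
  length_pos := by simpa using P.length_pos
  ear := by
    obtain ⟨a, b, w, -, hpath | ⟨rfl, hcycle⟩⟩ := P
    · exact .inl (by simpa using hpath)
    · exact .inr ⟨rfl, by simpa using hcycle⟩

theorem edges_mapLe (h : H ≤ G) (P : Ear H) : (P.mapLe h).edges = P.edges :=
  P.walk.edges_mapLe_eq_edges h

theorem isPath_of_isOpen {P : Ear G} (hP : P.IsOpen) : P.walk.IsPath :=
  P.ear.elim And.right fun ⟨h, _⟩ => absurd h hP

theorem exists_isCycle_of_not_isOpen {P : Ear G} (hP : ¬ P.IsOpen) :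
    ∃ c : G.Walk P.a P.a, c.IsCycle ∧ c.support = P.walk.support ∧ c.edges = P.walk.edges := by
  obtain hpath | ⟨h, hc⟩ := P.ear
  · exact absurd hpath.1 hP
  · exact ⟨_, hc, by simp, by simp⟩

theorem edges_nodup : P.edges.Nodup := by
  by_cases hP : P.IsOpen
  · exact (isPath_of_isOpen hP).isTrail.edges_nodup
  · obtain ⟨c, hc, -, hedges⟩ := exists_isCycle_of_not_isOpen hP
    exact (hedges ▸ hc.isTrail.edges_nodup :)

theorem endpoints_subset_vertices : P.endpoints ⊆ P.vertices := by
  rintro x (rfl | rfl)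
  · exact P.walk.start_mem_support
  · exact P.walk.end_mem_support

theorem finite_vertices : P.vertices.Finite := P.walk.support.finite_toSet

theorem ncard_vertices_of_isOpen {P : Ear G} (hP : P.IsOpen) :
    P.vertices.ncard = P.walk.length + 1 := by
  rw [← Walk.length_support]
  exact ncard_setOf_mem_list (isPath_of_isOpen hP).support_nodup

theorem ncard_vertices_of_not_isOpen {P : Ear G} (hP : ¬ P.IsOpen) :
    P.vertices.ncard = P.walk.length := by
  obtain ⟨c, hc, hsupport, hedges⟩ := exists_isCycle_of_not_isOpen hP
  have hverts : P.vertices = {v | v ∈ c.support.tail} := by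
    ext v
    rw [vertices, Set.mem_ofPred_eq, Set.mem_ofPred_eq, ← hsupport, c.mem_support_iff]
    exact or_iff_right_of_imp fun hv => hv ▸ Walk.end_mem_tail_support hc.not_nil
  rw [hverts, ncard_setOf_mem_list hc.support_nodup, List.length_tail, Walk.length_support,
    ← P.walk.length_edges, ← hedges, c.length_edges, Nat.add_sub_cancel]

theorem ncard_internal_add_one : P.internal.ncard + 1 = P.walk.length := by
  have hdiff := Set.ncard_sdiff_add_ncard_of_subset P.endpoints_subset_vertices P.finite_vertices
  by_cases hP : P.IsOpen
  · have hend : P.endpoints.ncard = 2 := Set.ncard_pair hP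
    rw [hend, ncard_vertices_of_isOpen hP] at hdiff
    exact Nat.succ.inj hdiff
  · have hend : P.endpoints.ncard = 1 := by simp [endpoints, not_not.mp hP]
    rwa [hend, ncard_vertices_of_not_isOpen hP] at hdiff

theorem finite_internal : P.internal.Finite := P.finite_vertices.subset Set.sdiff_subset

theorem internal_eq_empty_iff : P.internal = ∅ ↔ P.IsTrivial := by
  rw [← Set.ncard_eq_zero P.finite_internal, IsTrivial, ← P.ncard_internal_add_one]
  omega

theorem exists_mem_internal_of_mem_edges {P : Ear G} (hP : ¬ P.IsTrivial) {e : Sym2 V}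
    (he : e ∈ P.edges) : ∃ z ∈ e, z ∈ P.internal := by
  by_contra! hint
  have hend : ∀ z ∈ e, z ∈ P.endpoints := fun z hz => by
    by_contra hz'
    exact hint z hz ⟨Walk.mem_support_of_mem_edges he hz, hz'⟩
  induction e with | _ x y
  have hxy : x ≠ y := (P.walk.adj_of_mem_edges he).ne
  have heq : s(x, y) = s(P.a, P.b) := by
    have hx := hend x (Sym2.mem_mk_left x y)
    have hy := hend y (Sym2.mem_mk_right x y)
    simp only [endpoints, Set.mem_insert_iff, Set.mem_singleton_iff] at hx hy
    grind
  have hopen : P.IsOpen := by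
    simp only [IsOpen]
    grind
  exact hP ((isPath_of_isOpen hopen).length_eq_one_of_mem_edges (heq ▸ he))

variable {P} {S : Set V}

theorem attachesTo_iff : P.AttachesTo S ↔ P.endpoints ⊆ S ∧ P.internal ∩ S = ∅ := by
  have hsub := P.endpoints_subset_vertices
  constructor
  · intro h
    refine ⟨h ▸ Set.inter_subset_right, Set.eq_empty_of_forall_notMem fun x hx => ?_⟩
    exact hx.1.2 (h ▸ ⟨hx.1.1, hx.2⟩)
  · rintro ⟨hend, hint⟩
    refine Set.Subset.antisymm (fun x hx => ?_) (Set.subset_inter hsub hend)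
    by_contra hx'
    exact Set.eq_empty_iff_forall_notMem.mp hint x ⟨⟨hx.1, hx'⟩, hx.2⟩

theorem AttachesTo.union_vertices (h : P.AttachesTo S) : S ∪ P.vertices = S ∪ P.internal := by
  have := (attachesTo_iff.mp h).1
  rw [internal, ← Set.union_sdiff_self]
  grind

end Ear

section EarSequence

variable {G H : SimpleGraph V} {r : V} {L T : List (Ear G)} {P : Ear G}

/-- The vertices of the root `r` and of all ears of the list `L`. -/
def coveredVerts (r : V) (L : List (Ear G)) : Set V := insert r {v | ∃ P ∈ L, v ∈ P.vertices}

/-- A list of ears that may start an ear-decomposition with root `r`: each ear shares exactly its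
endpoints with what comes before it. Unlike for `EarDecomp`, the edges of `G` need not all be
covered. -/
def IsEarSequence (r : V) (L : List (Ear G)) : Prop :=
  ∀ i (hi : i < L.length), L[i].AttachesTo (coveredVerts r (L.take i))

theorem priorVerts_eq_coveredVerts_take (r : V) (L : List (Ear G)) (i : ℕ) :
    priorVerts r L i = coveredVerts r (L.take i) := by
  ext v
  simp only [priorVerts, coveredVerts, Set.mem_insert_iff, Set.mem_ofPred_eq,
    List.mem_take_iff_getElem, List.get_eq_getElem]
  refine or_congr_right ⟨?_, ?_⟩
  · rintro ⟨j, hj, hv⟩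
    exact ⟨_, ⟨j, by omega, rfl⟩, hv⟩
  · rintro ⟨_, ⟨j, hj, rfl⟩, hv⟩
    exact ⟨⟨j, by omega⟩, by simp; omega, hv⟩

theorem coveredVerts_nil : coveredVerts r ([] : List (Ear G)) = {r} := by
  simp [coveredVerts]

theorem coveredVerts_concat : coveredVerts r (L ++ [P]) = coveredVerts r L ∪ P.vertices := by
  ext v
  simp [coveredVerts, or_and_right, exists_or, or_assoc]

theorem vertices_subset_coveredVerts (hP : P ∈ L) : P.vertices ⊆ coveredVerts r L :=
  fun _ hv => .inr ⟨P, hP, hv⟩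

theorem coveredVerts_subset_append : coveredVerts r L ⊆ coveredVerts r (L ++ T) := by
  rintro v (rfl | ⟨P, hP, hv⟩)
  · exact .inl rfl
  · exact vertices_subset_coveredVerts (List.mem_append_left T hP) hv

theorem coveredVerts_map_mapLe (hHG : H ≤ G) (L : List (Ear H)) :
    coveredVerts r (L.map (Ear.mapLe hHG)) = coveredVerts r L := by
  ext v
  simp [coveredVerts, Ear.vertices, Ear.mapLe]

theorem finite_coveredVerts : (coveredVerts r L).Finite := by
  induction L using List.reverseRecOn with
  | nil => simp [coveredVerts_nil]
  | append_singleton L P ih => exact coveredVerts_concat ▸ ih.union P.finite_vertices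

namespace IsEarSequence

theorem nil : IsEarSequence r ([] : List (Ear G)) := fun _ hi => absurd hi (Nat.not_lt_zero _)

theorem concat_iff : IsEarSequence r (L ++ [P]) ↔
    IsEarSequence r L ∧ P.AttachesTo (coveredVerts r L) := by
  simp only [IsEarSequence, List.length_append, List.length_singleton, Nat.forall_lt_succ_right']
  refine and_congr (forall₂_congr fun i hi => ?_) ?_
  · rw [List.getElem_append_left hi, List.take_append_of_le_length hi.le]
  · simp

theorem map_mapLe (hHG : H ≤ G) {L : List (Ear H)} (h : IsEarSequence r L) :
    IsEarSequence r (L.map (Ear.mapLe hHG)) := fun i hi => by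
  rw [List.getElem_map, ← List.map_take, coveredVerts_map_mapLe]
  simpa [Ear.AttachesTo, Ear.vertices, Ear.endpoints, Ear.mapLe] using
    h i (by simpa using hi)

theorem append_of_isTrivial (h : IsEarSequence r L) (hcover : coveredVerts r L = Set.univ)
    (hT : ∀ P ∈ T, P.IsTrivial) : IsEarSequence r (L ++ T) := by
  induction T using List.reverseRecOn with
  | nil => simpa using h
  | append_singleton T P ih =>
    have huniv : coveredVerts r (L ++ T) = Set.univ :=
      Set.univ_subset_iff.mp (hcover ▸ coveredVerts_subset_append)
    have hint : P.internal = ∅ := P.internal_eq_empty_iff.mpr (hT P (by simp))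
    rw [← List.append_assoc, concat_iff, huniv, Ear.attachesTo_iff, hint]
    exact ⟨ih fun Q hQ => hT Q (List.mem_append_left _ hQ), Set.subset_univ _, Set.empty_inter _⟩

theorem ncard_coveredVerts_add_length (h : IsEarSequence r L) :
    (coveredVerts r L).ncard + L.length = (L.map fun P => P.walk.length).sum + 1 := by
  induction L using List.reverseRecOn with
  | nil => simp [coveredVerts_nil]
  | append_singleton L P ih =>
    obtain ⟨hL, hP⟩ := concat_iff.mp h
    have hdisj : Disjoint (coveredVerts r L) P.internal :=
      (Set.disjoint_iff_inter_eq_empty.mpr (Ear.attachesTo_iff.mp hP).2).symm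
    rw [coveredVerts_concat, hP.union_vertices,
      Set.ncard_union_eq hdisj finite_coveredVerts P.finite_internal]
    simp only [List.length_append, List.length_singleton, List.map_append, List.map_singleton,
      List.sum_append, List.sum_singleton]
    have := ih hL
    have := P.ncard_internal_add_one
    omega

theorem pairwise_disjoint_edges (h : IsEarSequence r L) (hL : ∀ P ∈ L, ¬ P.IsTrivial) :
    L.Pairwise fun P Q => P.edges.Disjoint Q.edges := by
  induction L using List.reverseRecOn with
  | nil => exact List.Pairwise.nil
  | append_singleton L P ih =>
    obtain ⟨hseq, hP⟩ := concat_iff.mp h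
    refine List.pairwise_append.mpr
      ⟨ih hseq fun Q hQ => hL Q (List.mem_append_left _ hQ), List.pairwise_singleton _ _, ?_⟩
    intro Q hQ P' hP' e heQ heP
    obtain rfl := List.mem_singleton.mp hP'
    obtain ⟨z, hze, hz⟩ := Ear.exists_mem_internal_of_mem_edges (hL P' (by simp)) heP
    have hzQ : z ∈ Q.vertices := Walk.mem_support_of_mem_edges heQ hze
    exact Set.eq_empty_iff_forall_notMem.mp (Ear.attachesTo_iff.mp hP).2 z
      ⟨hz, vertices_subset_coveredVerts hQ hzQ⟩

end IsEarSequence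

end EarSequence

section Connectivity

variable {G H : SimpleGraph V} {r v x y : V} {L : List (Ear G)} {P : Ear G}

theorem Ear.reachableAvoiding_endpoint (hP : P.IsOpen) (hH : ∀ e ∈ P.edges, e ∈ H.edgeSet)
    (hx : x ∈ P.vertices) (hxv : x ≠ v) : ∃ y ∈ P.endpoints, y ≠ v ∧ ReachableAvoiding H v x y := by
  have hpath : (P.walk.transfer H hH).IsPath := (Ear.isPath_of_isOpen hP).transfer hH
  have hx' : x ∈ (P.walk.transfer H hH).support := (P.walk.support_transfer hH).symm ▸ hx
  rcases reachableAvoiding_start_or_end_of_isPath hpath hx' hxv with h | h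
  · exact ⟨P.a, .inl rfl, h.ne_right, h⟩
  · exact ⟨P.b, .inr rfl, h.ne_right, h⟩

theorem Ear.reachableAvoiding_of_not_isOpen (hP : ¬ P.IsOpen)
    (hH : ∀ e ∈ P.edges, e ∈ H.edgeSet) (hx : x ∈ P.vertices) (hy : y ∈ P.vertices)
    (hxv : x ≠ v) (hyv : y ≠ v) : ReachableAvoiding H v x y := by
  obtain ⟨c, hc, hsupport, hedges⟩ := Ear.exists_isCycle_of_not_isOpen hP
  have hcH : ∀ e ∈ c.edges, e ∈ H.edgeSet := fun e he => hH e (hedges ▸ he :)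
  refine reachableAvoiding_of_isCycle (hc.transfer hcH) ?_ ?_ hxv hyv
  · rw [Walk.support_transfer, hsupport]
    exact hx
  · rw [Walk.support_transfer, hsupport]
    exact hy

theorem Ear.AttachesTo.reachableAvoiding_of_isOpen {S : Set V} (hPS : P.AttachesTo S)
    (hP : P.IsOpen) (hH : ∀ e ∈ P.edges, e ∈ H.edgeSet)
    (hS : ∀ x ∈ S, ∀ y ∈ S, x ≠ v → y ≠ v → ReachableAvoiding H v x y)
    (hx : x ∈ S ∪ P.vertices) (hy : y ∈ S ∪ P.vertices) (hxv : x ≠ v) (hyv : y ≠ v) :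
    ReachableAvoiding H v x y := by
  have toS : ∀ z ∈ S ∪ P.vertices, z ≠ v → ∃ w ∈ S, w ≠ v ∧ ReachableAvoiding H v z w := by
    rintro z (hz | hz) hzv
    · exact ⟨z, hz, hzv, .refl hzv⟩
    · obtain ⟨w, hw, hwv, hzw⟩ := Ear.reachableAvoiding_endpoint hP hH hz hzv
      exact ⟨w, (Ear.attachesTo_iff.mp hPS).1 hw, hwv, hzw⟩
  obtain ⟨x', hx', hxv', hxx'⟩ := toS x hx hxv
  obtain ⟨y', hy', hyv', hyy'⟩ := toS y hy hyv
  exact (hxx'.trans (hS x' hx' y' hy' hxv' hyv')).trans hyy'.symm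

theorem IsEarSequence.reachableAvoiding (h : IsEarSequence r L)
    (hopen : ∀ P ∈ L.tail, P.IsOpen)
    (hH : ∀ P ∈ L, ¬ P.IsTrivial → ∀ e ∈ P.edges, e ∈ H.edgeSet)
    (hx : x ∈ coveredVerts r L) (hy : y ∈ coveredVerts r L) (hxv : x ≠ v) (hyv : y ≠ v) :
    ReachableAvoiding H v x y := by
  induction L using List.reverseRecOn generalizing x y with
  | nil =>
    rw [coveredVerts_nil] at hx hy
    obtain rfl : x = y := hx.trans hy.symm
    exact .refl hxv
  | append_singleton L P ih =>
    obtain ⟨hL, hP⟩ := IsEarSequence.concat_iff.mp h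
    have ihL : ∀ x ∈ coveredVerts r L, ∀ y ∈ coveredVerts r L, x ≠ v → y ≠ v →
        ReachableAvoiding H v x y := fun x hx y hy =>
      ih hL (fun Q hQ => hopen Q ((List.sublist_append_left L [P]).tail.subset hQ))
        (fun Q hQ => hH Q (List.mem_append_left _ hQ)) hx hy
    rw [coveredVerts_concat] at hx hy
    by_cases htriv : P.IsTrivial
    · rw [hP.union_vertices, P.internal_eq_empty_iff.mpr htriv, Set.union_empty] at hx hy
      exact ihL x hx y hy hxv hyv
    have hPH := hH P (by simp) htriv
    rcases eq_or_ne L [] with rfl | hne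
    · have hend := (Ear.attachesTo_iff.mp hP).1
      rw [coveredVerts_nil] at hx hy hend
      have ha : P.a = r := hend (.inl rfl)
      have hb : P.b = r := hend (.inr rfl)
      have hr : {r} ⊆ P.vertices :=
        Set.singleton_subset_iff.mpr (ha ▸ P.endpoints_subset_vertices (.inl rfl))
      rw [Set.union_eq_right.mpr hr] at hx hy
      exact Ear.reachableAvoiding_of_not_isOpen (not_not.mpr (ha.trans hb.symm)) hPH hx hy hxv hyv
    · have hPopen : P.IsOpen := hopen P (by simp [List.tail_append_of_ne_nil hne])
      exact hP.reachableAvoiding_of_isOpen hPopen hPH ihL hx hy hxv hyv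

end Connectivity

section NextEar

variable {G : SimpleGraph V} {S : Set V} {s t x y : V}

theorem exists_open_ear_attachesTo (hS : S.Finite) (hs : s ∈ S) (ht : t ∈ S) (hsx : G.Adj s x)
    (hxt : ReachableAvoiding G s x t) : ∃ P : Ear G, P.AttachesTo S ∧ x ∈ P.vertices := by
  classical
  obtain ⟨p, hp⟩ := hxt
  obtain ⟨u, huS, hup, hfirst⟩ := p.bypass.exists_mem_support_forall_mem_support_imp_eq hS.toFinset
    ⟨t, Finset.mem_filter.mpr ⟨hS.mem_toFinset.mpr ht, p.bypass.end_mem_support⟩⟩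
  simp only [Set.Finite.mem_toFinset] at huS hfirst
  set q := p.bypass.takeUntil u hup
  have hsq : s ∉ q.support := fun h =>
    hp (p.support_bypass_subset_support (p.bypass.support_takeUntil_subset_support hup h))
  have hpath : (Walk.cons hsx q).IsPath := (p.bypass_isPath.takeUntil hup).cons hsq
  have hsu : s ≠ u := fun h => hsq (h ▸ q.end_mem_support)
  refine ⟨⟨s, u, _, by simp, .inl ⟨hsu, hpath⟩⟩, Ear.attachesTo_iff.mpr ⟨?_, ?_⟩, ?_⟩
  · exact Set.pair_subset hs huS
  · refine Set.eq_empty_of_forall_notMem ?_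
    rintro z ⟨⟨hz, hzend⟩, hzS⟩
    rcases List.mem_cons.mp hz with rfl | hzq
    · exact hzend (.inl rfl)
    · exact hzend (.inr (hfirst z hzS hzq))
  · exact List.mem_cons_of_mem _ q.start_mem_support

theorem exists_closed_ear_attachesTo (hsx : G.Adj s x) (hsy : G.Adj s y) (hyx : y ≠ x)
    (hxy : ReachableAvoiding G s x y) : ∃ P : Ear G, P.AttachesTo {s} ∧ x ∈ P.vertices := by
  classical
  obtain ⟨p, hp⟩ := hxy
  have hsp : s ∉ p.bypass.support := fun h => hp (p.support_bypass_subset_support h)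
  have hcycle : (Walk.cons hsx (p.bypass.concat hsy.symm)).IsCycle := by
    refine (Walk.cons_isCycle_iff _ _).mpr ⟨p.bypass_isPath.concat hsp _, ?_⟩
    rw [Walk.edges_concat, List.concat_eq_append, List.mem_append, List.mem_singleton, Sym2.eq_swap,
      Sym2.congr_left]
    rintro (h | rfl)
    · exact hsp (p.bypass.snd_mem_support_of_mem_edges h)
    · exact hyx rfl
  refine ⟨⟨s, s, _, by simp, .inr ⟨rfl, hcycle⟩⟩, Ear.attachesTo_iff.mpr ⟨?_, ?_⟩, ?_⟩
  · simp [Ear.endpoints]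
  · refine Set.eq_empty_of_forall_notMem ?_
    rintro z ⟨hz, rfl⟩
    exact hz.2 (.inl rfl)
  · simp [Ear.vertices]

theorem TwoVertexConnected.exists_ear_attachesTo (h : TwoVertexConnected G) (hS : S.Nonempty)
    (hne : S ≠ Set.univ) : ∃ P : Ear G, P.AttachesTo S ∧ ¬ P.IsTrivial := by
  have := h.finite
  obtain ⟨s₀, hs₀⟩ := hS
  obtain ⟨x₀, hx₀⟩ := (Set.ne_univ_iff_exists_notMem S).mp hne
  obtain ⟨p⟩ := h.preconnected s₀ x₀
  obtain ⟨⟨⟨s, x⟩, hsx⟩, -, hs, hx⟩ := p.exists_boundary_dart S hs₀ hx₀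
  have hreach := (twoVertexConnected_iff_reachableAvoiding.mp h).2 s x
  obtain ⟨P, hP, hxP⟩ : ∃ P : Ear G, P.AttachesTo S ∧ x ∈ P.vertices := by
    by_cases hsingle : ∃ t ∈ S, t ≠ s
    · obtain ⟨t, ht, hts⟩ := hsingle
      exact exists_open_ear_attachesTo S.toFinite hs ht hsx (hreach t hsx.ne' hts)
    · obtain rfl : S = {s} := Set.eq_singleton_iff_unique_mem.mpr ⟨hs, by simpa using hsingle⟩
      obtain ⟨y, hyx, hsy⟩ := h.exists_adj_ne hsx.ne
      exact exists_closed_ear_attachesTo hsx hsy hyx (hreach y hsx.ne' hsy.ne')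
  refine ⟨P, hP, fun htriv => ?_⟩
  have hxint : x ∈ P.internal := ⟨hxP, fun hend => hx ((Ear.attachesTo_iff.mp hP).1 hend)⟩
  exact Set.notMem_empty x (P.internal_eq_empty_iff.mpr htriv ▸ hxint)

theorem TwoVertexConnected.exists_isEarSequence_covering (h : TwoVertexConnected G) (r : V) :
    ∃ L : List (Ear G), IsEarSequence r L ∧ (∀ P ∈ L, ¬ P.IsTrivial) ∧
      coveredVerts r L = Set.univ := by
  have := h.finite
  let covers : Set (Set V) := {S | ∃ L : List (Ear G), IsEarSequence r L ∧
    (∀ P ∈ L, ¬ P.IsTrivial) ∧ coveredVerts r L = S}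
  have hcovers : covers.Nonempty := ⟨_, [], .nil, by simp, rfl⟩
  obtain ⟨_, ⟨L, hL, hnontriv, rfl⟩, hmax⟩ := covers.toFinite.exists_maximal hcovers
  refine ⟨L, hL, hnontriv, by_contra fun huniv => ?_⟩
  obtain ⟨P, hP, hPnontriv⟩ := h.exists_ear_attachesTo ⟨r, .inl rfl⟩ huniv
  have hLP : coveredVerts r (L ++ [P]) ∈ covers :=
    ⟨L ++ [P], IsEarSequence.concat_iff.mpr ⟨hL, hP⟩,
      List.forall_mem_append.mpr ⟨hnontriv, by simpa using hPnontriv⟩, rfl⟩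
  have hsub : P.internal ⊆ coveredVerts r L :=
    Set.sdiff_subset.trans ((vertices_subset_coveredVerts (by simp)).trans
      (hmax hLP coveredVerts_subset_append))
  rw [← P.internal_eq_empty_iff, ← Set.inter_eq_left.mpr hsub] at hPnontriv
  exact hPnontriv (Ear.attachesTo_iff.mp hP).2

end NextEar

section Extension

variable {G H : SimpleGraph V} {r : V} {L : List (Ear G)}

/-- An ear sequence whose ears partition the edges of `G`, as an ear-decomposition. -/
def EarDecomp.ofIsEarSequence (h : IsEarSequence r L)
    (hdisj : L.Pairwise fun P Q => P.edges.Disjoint Q.edges)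
    (hcover : ∀ e ∈ G.edgeSet, ∃ P ∈ L, e ∈ P.edges) : EarDecomp G where
  root := r
  ears := L
  endpoints_sub i := by
    rw [priorVerts_eq_coveredVerts_take]
    exact (Ear.attachesTo_iff.mp (h i i.2)).1
  internal_new i := by
    rw [priorVerts_eq_coveredVerts_take]
    exact (Ear.attachesTo_iff.mp (h i i.2)).2
  edge_cover e he := by
    obtain ⟨P, hP, heP⟩ := hcover e he
    obtain ⟨i, rfl⟩ := List.get_of_mem hP
    refine ⟨i, heP, fun j hej => ?_⟩
    by_contra hij
    have hpair := List.pairwise_iff_get.mp hdisj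
    rcases lt_or_gt_of_ne hij with hlt | hlt
    · exact hpair _ _ hlt hej heP
    · exact hpair _ _ hlt heP hej

theorem exists_trivial_ears_of_finite {E : Set (Sym2 V)} (hfin : E.Finite) (hE : E ⊆ G.edgeSet) :
    ∃ T : List (Ear G), (∀ P ∈ T, P.IsTrivial) ∧
      T.Pairwise (fun P Q => P.edges.Disjoint Q.edges) ∧ ∀ e, (∃ P ∈ T, e ∈ P.edges) ↔ e ∈ E := by
  induction E, hfin using Set.Finite.induction_on with
  | empty => exact ⟨[], by simp⟩
  | @insert e E he _ ih =>
    obtain ⟨heG, hEG⟩ := Set.insert_subset_iff.mp hE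
    obtain ⟨T, htriv, hdisj, hT⟩ := ih hEG
    obtain ⟨P, hPtriv, hPe⟩ : ∃ P : Ear G, P.IsTrivial ∧ P.edges = [e] := by
      induction e with | _ x y
      exact ⟨trivialEar G heG, rfl, rfl⟩
    refine ⟨P :: T, List.forall_mem_cons.mpr ⟨hPtriv, htriv⟩,
      List.pairwise_cons.mpr ⟨?_, hdisj⟩, ?_⟩
    · intro Q hQ
      rw [hPe, List.singleton_disjoint]
      exact fun heQ => he ((hT e).mp ⟨Q, hQ, heQ⟩)
    · intro f
      simp [hPe, hT]

theorem IsEarSequence.exists_earDecomp_extending (hHG : H ≤ G) {L : List (Ear H)}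
    (h : IsEarSequence r L) (hnontriv : ∀ P ∈ L, ¬ P.IsTrivial)
    (hcover : coveredVerts r L = Set.univ) :
    ∃ D : EarDecomp G, ∀ P ∈ D.ears, ¬ P.IsTrivial → ∀ e ∈ P.edges, e ∈ H.edgeSet := by
  have : Finite V := Set.finite_univ_iff.mp (hcover ▸ finite_coveredVerts)
  set M : List (Ear G) := L.map (Ear.mapLe hHG)
  have hM : IsEarSequence r M := h.map_mapLe hHG
  have hMtriv : ∀ P ∈ M, ¬ P.IsTrivial := by
    simpa [M, Ear.IsTrivial, Ear.mapLe] using hnontriv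
  have hMH : ∀ P ∈ M, ∀ e ∈ P.edges, e ∈ H.edgeSet := by
    rintro P hP e he
    obtain ⟨Q, -, rfl⟩ := List.mem_map.mp hP
    exact Q.walk.edges_subset_edgeSet (Q.edges_mapLe hHG ▸ he :)
  obtain ⟨T, hTtriv, hTdisj, hT⟩ := exists_trivial_ears_of_finite
    (E := {e ∈ G.edgeSet | ∀ P ∈ M, e ∉ P.edges}) (Set.toFinite _) (Set.sep_subset _ _)
  have hseq : IsEarSequence r (M ++ T) :=
    hM.append_of_isTrivial (by rw [coveredVerts_map_mapLe, hcover]) hTtriv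
  have hdisj : (M ++ T).Pairwise fun P Q => P.edges.Disjoint Q.edges :=
    List.pairwise_append.mpr ⟨hM.pairwise_disjoint_edges hMtriv, hTdisj,
      fun P hP Q hQ e heP heQ => ((hT e).mp ⟨Q, hQ, heQ⟩).2 P hP heP⟩
  have hedges : ∀ e ∈ G.edgeSet, ∃ P ∈ M ++ T, e ∈ P.edges := fun e he => by
    by_cases heM : ∃ P ∈ M, e ∈ P.edges
    · obtain ⟨P, hP, heP⟩ := heM
      exact ⟨P, List.mem_append_left _ hP, heP⟩
    · obtain ⟨P, hP, heP⟩ := (hT e).mpr ⟨he, by simpa using heM⟩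
      exact ⟨P, List.mem_append_right _ hP, heP⟩
  refine ⟨.ofIsEarSequence hseq hdisj hedges, fun P hP hPtriv => ?_⟩
  exact hMH P ((List.mem_append.mp hP).resolve_right fun hPT => hPtriv (hTtriv P hPT))

theorem TwoVertexConnected.exists_earDecomp_extending (hH : TwoVertexConnected H) (hHG : H ≤ G) :
    ∃ D : EarDecomp G, ∀ P ∈ D.ears, ¬ P.IsTrivial → ∀ e ∈ P.edges, e ∈ H.edgeSet := by
  obtain ⟨r, -⟩ := hH.nontrivial.exists_pair_ne
  obtain ⟨L, hL, hnontriv, hcover⟩ := hH.exists_isEarSequence_covering r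
  exact hL.exists_earDecomp_extending hHG hnontriv hcover

end Extension

theorem countP_eq_sum_get {α : Type*} (p : α → Prop) [DecidablePred p] (l : List α) :
    l.countP (fun x => decide (p x)) = ∑ i, if p (l.get i) then 1 else 0 := by
  induction l with
  | nil => rfl
  | cons x l ih =>
    simp only [List.countP_cons, ih, decide_eq_true_eq, add_comm]
    exact (Fin.sum_univ_succ (n := l.length) fun i => if p ((x :: l).get i) then 1 else 0).symm

namespace EarDecomp

variable {G : SimpleGraph V} (D : EarDecomp G)

theorem isEarSequence : IsEarSequence D.root D.ears := fun i hi => by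
  rw [← priorVerts_eq_coveredVerts_take]
  exact Ear.attachesTo_iff.mpr ⟨D.endpoints_sub ⟨i, hi⟩, D.internal_new ⟨i, hi⟩⟩

theorem disjoint_internal {D : EarDecomp G} {i j : Fin D.ears.length} (hij : i ≠ j) :
    Disjoint (D.ears.get i).internal (D.ears.get j).internal := by
  wlog hlt : i < j generalizing i j
  · exact (this hij.symm (lt_of_le_of_ne (not_lt.mp hlt) hij.symm)).symm
  refine Set.disjoint_left.mpr fun x hxi hxj => ?_
  exact Set.eq_empty_iff_forall_notMem.mp (D.internal_new j) x ⟨hxj, .inr ⟨i, hlt, hxi.1⟩⟩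

theorem eq_of_mem_edges {D : EarDecomp G} {i j : Fin D.ears.length} {e : Sym2 V}
    (hi : e ∈ (D.ears.get i).edges) (hj : e ∈ (D.ears.get j).edges) : i = j :=
  (D.edge_cover e ((D.ears.get i).walk.edges_subset_edgeSet hi)).unique hi hj

theorem IsOpen.of_mem_tail {D : EarDecomp G} (hD : D.IsOpen) {P : Ear G}
    (hP : P ∈ D.ears.tail) : P.IsOpen := by
  obtain ⟨i, hi, rfl⟩ := List.mem_iff_getElem.mp hP
  rw [List.getElem_tail]
  exact hD ⟨i + 1, _⟩ (Nat.le_add_left 1 i)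

theorem coveredVerts_eq_univ [Nontrivial V] (hG : G.Preconnected) :
    coveredVerts D.root D.ears = Set.univ := by
  refine Set.eq_univ_of_forall fun v => ?_
  obtain ⟨w, hvw⟩ := hG.exists_adj_of_nontrivial v
  obtain ⟨i, hi, -⟩ := D.edge_cover s(v, w) hvw
  exact vertices_subset_coveredVerts (List.get_mem _ i) (Walk.fst_mem_support_of_mem_edges _ hi)

theorem card_add_length [Nontrivial V] (hG : G.Preconnected) :
    Nat.card V + D.ears.length = ∑ i, (D.ears.get i).walk.length + 1 := by
  have hcard := D.isEarSequence.ncard_coveredVerts_add_length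
  rwa [D.coveredVerts_eq_univ hG, Set.ncard_univ, ← Fin.sum_univ_fun_getElem] at hcard

theorem evenEars_eq_sum :
    D.evenEars = ∑ i, if Even (D.ears.get i).walk.length then 1 else 0 :=
  countP_eq_sum_get (fun P : Ear G => Even P.walk.length) D.ears

variable [DecidableEq V]

theorem mem_nontrivialEdges {D : EarDecomp G} {e : Sym2 V} :
    e ∈ D.nontrivialEdges ↔ ∃ P ∈ D.ears, ¬ P.IsTrivial ∧ e ∈ P.edges := by
  simp [nontrivialEdges, List.exists_mem_iff_get]

theorem card_nontrivialEdges : D.nontrivialEdges.card =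
    ∑ i, if (D.ears.get i).walk.length = 1 then 0 else (D.ears.get i).walk.length := by
  classical
  have hdisj : Set.univ.PairwiseDisjoint fun i => (D.ears.get i).edges.toFinset :=
    fun i _ j _ hij => Finset.disjoint_left.mpr fun e hi hj =>
      hij (eq_of_mem_edges (List.mem_toFinset.mp hi) (List.mem_toFinset.mp hj))
  rw [nontrivialEdges, Finset.card_biUnion (hdisj.subset (Set.subset_univ _)), Finset.sum_filter]
  refine Finset.sum_congr rfl fun i _ => ?_
  rw [List.toFinset_card_of_nodup (D.ears.get i).edges_nodup, Ear.edges, Walk.length_edges]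
  split_ifs <;> grind [Ear.IsTrivial]

theorem card_add_evenEars_le [Nontrivial V] (hG : G.Preconnected) :
    Nat.card V + D.evenEars ≤ D.nontrivialEdges.card + 1 := by
  have hsum : ∑ i, ((if Even (D.ears.get i).walk.length then 1 else 0) +
      (D.ears.get i).walk.length) ≤
      ∑ i, ((if (D.ears.get i).walk.length = 1 then 0 else (D.ears.get i).walk.length) + 1) :=
    Finset.sum_le_sum fun i _ => by grind
  have hcard := D.card_add_length hG
  rw [Finset.sum_add_distrib, Finset.sum_add_distrib, ← evenEars_eq_sum, ← card_nontrivialEdges,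
    Finset.sum_const, Finset.card_fin] at hsum
  lia

end EarDecomp

theorem phi_le_evenEars {G : SimpleGraph V} (D : EarDecomp G) : phi G ≤ D.evenEars :=
  Nat.sInf_le ⟨D, rfl⟩

theorem TwoVertexConnected.card_add_phi_le {G H : SimpleGraph V} (hH : TwoVertexConnected H)
    (hHG : H ≤ G) : Nat.card V + phi G ≤ H.edgeSet.ncard + 1 := by
  classical
  have := hH.finite
  have := hH.nontrivial
  obtain ⟨D, hD⟩ := hH.exists_earDecomp_extending hHG
  have hsub : (D.nontrivialEdges : Set (Sym2 V)) ⊆ H.edgeSet := fun e he => by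
    obtain ⟨P, hP, hPtriv, heP⟩ := EarDecomp.mem_nontrivialEdges.mp (Finset.mem_coe.mp he)
    exact hD P hP hPtriv e heP
  calc Nat.card V + phi G
      ≤ Nat.card V + D.evenEars := Nat.add_le_add_left (phi_le_evenEars D) _
    _ ≤ D.nontrivialEdges.card + 1 := D.card_add_evenEars_le (hH.preconnected.mono hHG)
    _ ≤ H.edgeSet.ncard + 1 := by
      rw [← Set.ncard_coe_finset]
      exact Nat.add_le_add_right (Set.ncard_le_ncard hsub) 1

section ShortEars

variable {G H : SimpleGraph V}

/-- The edges of `H` with at least one end in `U`. -/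
def edgesMeeting (H : SimpleGraph V) (U : Set V) : Set (Sym2 V) := {e ∈ H.edgeSet | ∃ u ∈ U, u ∈ e}

theorem edgesMeeting_singleton (u : V) : edgesMeeting H {u} = H.incidenceSet u := by
  simp [edgesMeeting, incidenceSet]

theorem edgesMeeting_pair (u v : V) :
    edgesMeeting H {u, v} = H.incidenceSet u ∪ H.incidenceSet v := by
  ext e
  simp [edgesMeeting, incidenceSet, and_or_left]

theorem ncard_inter_incidenceSet_le_one {u v : V} (huv : u ≠ v) :
    (H.incidenceSet u ∩ H.incidenceSet v).ncard ≤ 1 :=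
  (Set.ncard_le_ncard (H.incidenceSet_inter_incidenceSet_subset huv)).trans_eq
    (Set.ncard_singleton _)

theorem ncard_add_one_le_ncard_edgesMeeting (hH : ∀ u, 2 ≤ (H.incidenceSet u).ncard)
    {U : Set V} (hU : U.ncard = 1 ∨ U.ncard = 2) : U.ncard + 1 ≤ (edgesMeeting H U).ncard := by
  have hfin (u : V) : (H.incidenceSet u).Finite :=
    Set.finite_of_ncard_ne_zero (Nat.ne_zero_of_lt (hH u))
  rcases hU with hU | hU <;> rw [hU]
  · obtain ⟨u, rfl⟩ := Set.ncard_eq_one.mp hU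
    exact edgesMeeting_singleton (H := H) u ▸ hH u
  · obtain ⟨u, v, huv, rfl⟩ := Set.ncard_eq_two.mp hU
    rw [edgesMeeting_pair]
    have hunion := Set.ncard_union_add_ncard_inter _ _ (hfin u) (hfin v)
    have hinter := ncard_inter_incidenceSet_le_one (H := H) huv
    have := hH u
    have := hH v
    lia

theorem Ear.IsShort.length_le_ncard_edgesMeeting (hH : ∀ u, 2 ≤ (H.incidenceSet u).ncard)
    {P : Ear G} (hP : P.IsShort) :
    P.walk.length ≤ (edgesMeeting H P.internal).ncard := by
  rw [← P.ncard_internal_add_one]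
  refine ncard_add_one_le_ncard_edgesMeeting hH ?_
  rw [Ear.IsShort, ← P.ncard_internal_add_one] at hP
  lia

theorem disjoint_edgesMeeting {U W : Set V} (hUW : Disjoint U W)
    (hadj : ∀ u ∈ U, ∀ w ∈ W, ¬ H.Adj u w) : Disjoint (edgesMeeting H U) (edgesMeeting H W) := by
  refine Set.disjoint_left.mpr ?_
  rintro e ⟨he, u, hu, hue⟩ ⟨-, w, hw, hwe⟩
  have huw : u ≠ w := fun h => Set.disjoint_left.mp hUW hu (h ▸ hw)
  obtain rfl := (Sym2.mem_and_mem_iff huw).mp ⟨hue, hwe⟩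
  exact hadj u hu w hw he

/-- No edge of `G` joins internal vertices of two different short ears. This is the last
clause of `EarDecomp.IsNice`, named so that it can be assumed on its own. -/
def EarDecomp.ShortEarsNonadjacent (D : EarDecomp G) : Prop :=
  ∀ i j : Fin D.ears.length, i ≠ j → (D.ears.get i).IsShort → (D.ears.get j).IsShort →
    ∀ u ∈ (D.ears.get i).internal, ∀ v ∈ (D.ears.get j).internal, ¬ G.Adj u v

open Classical in
theorem EarDecomp.ShortEarsNonadjacent.sum_length_le [Finite V] {D : EarDecomp G}
    (hD : D.ShortEarsNonadjacent) (hHG : H ≤ G) (hH : ∀ u, 2 ≤ (H.incidenceSet u).ncard) :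
    ∑ i with (D.ears.get i).IsShort, (D.ears.get i).walk.length ≤ H.edgeSet.ncard := by
  let shortEars := Finset.univ.filter fun i => (D.ears.get i).IsShort
  let meeting (i : Fin D.ears.length) := edgesMeeting H (D.ears.get i).internal
  have hdisj : (shortEars : Set _).PairwiseDisjoint meeting := by
    intro i hi j hj hij
    refine disjoint_edgesMeeting (disjoint_internal hij) fun u hu w hw huw => ?_
    exact hD i j hij (Finset.mem_filter.mp hi).2 (Finset.mem_filter.mp hj).2 u hu w hw (hHG huw)
  calc ∑ i ∈ shortEars, (D.ears.get i).walk.length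
      ≤ ∑ i ∈ shortEars, (meeting i).ncard := Finset.sum_le_sum fun i hi =>
        (Finset.mem_filter.mp hi).2.length_le_ncard_edgesMeeting hH
    _ = (⋃ i ∈ (shortEars : Set _), meeting i).ncard := by
      rw [shortEars.finite_toSet.ncard_biUnion (fun _ _ => Set.toFinite _) hdisj,
        finsum_mem_coe_finset]
    _ ≤ H.edgeSet.ncard := Set.ncard_le_ncard (Set.iUnion₂_subset fun _ _ => Set.sep_subset _ _)

end ShortEars

section SizeBound

variable {G : SimpleGraph V}

theorem TwoVertexConnected.exists_ncard_edgeSet_eq_OPT2VC (hG : TwoVertexConnected G) :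
    ∃ H ≤ G, TwoVertexConnected H ∧ H.edgeSet.ncard = OPT2VC G :=
  Nat.sInf_mem (s := {n | ∃ H ≤ G, TwoVertexConnected H ∧ H.edgeSet.ncard = n})
    ⟨_, G, le_rfl, hG, rfl⟩

-- Equality holds for ears of length 1, 3 and 5, which fixes the weights 15 and 2.
open Classical in
theorem Ear.twelve_mul_length_add_le (P : Ear G) :
    12 * (if P.walk.length = 1 then 0 else P.walk.length) + 15 ≤
      15 * P.walk.length + 15 * (if Even P.walk.length then 1 else 0) +
        2 * (if P.IsShort then P.walk.length else 0) := by
  have := P.length_pos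
  have htwo : P.walk.length = 2 → Even P.walk.length := fun h => h ▸ even_two
  have hfour : P.walk.length = 4 → Even P.walk.length := fun h => h ▸ by decide
  split_ifs <;> grind [Ear.IsShort]

variable [DecidableEq V] {D : EarDecomp G}

open Classical in
theorem EarDecomp.twelve_mul_card_nontrivialEdges_add_le [Nontrivial V] (D : EarDecomp G)
    (hG : G.Preconnected) :
    12 * D.nontrivialEdges.card + 15 ≤ 15 * (Nat.card V + D.evenEars) +
      2 * ∑ i with (D.ears.get i).IsShort, (D.ears.get i).walk.length := by
  have hsum := Finset.sum_le_sum fun i (_ : i ∈ Finset.univ) =>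
    (D.ears.get i).twelve_mul_length_add_le
  simp only [Finset.sum_add_distrib, ← Finset.mul_sum, ← D.card_nontrivialEdges,
    ← D.evenEars_eq_sum, ← Finset.sum_filter, Finset.sum_const, Finset.card_fin,
    smul_eq_mul] at hsum
  have hcard := D.card_add_length hG
  lia

theorem EarDecomp.fromEdgeSet_nontrivialEdges_le (D : EarDecomp G) :
    fromEdgeSet (D.nontrivialEdges : Set (Sym2 V)) ≤ G := by
  refine G.fromEdgeSet_le.mpr fun e he => ?_
  obtain ⟨P, -, -, heP⟩ := mem_nontrivialEdges.mp (Finset.mem_coe.mp he.1)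
  exact P.walk.edges_subset_edgeSet heP

theorem EarDecomp.IsOpen.twoVertexConnected_fromEdgeSet_nontrivialEdges (hD : D.IsOpen)
    (hG : TwoVertexConnected G) :
    TwoVertexConnected (fromEdgeSet (D.nontrivialEdges : Set (Sym2 V))) := by
  have := hG.nontrivial
  have hcover := D.coveredVerts_eq_univ hG.preconnected
  refine twoVertexConnected_iff_reachableAvoiding.mpr ⟨hG.1, fun v x y hxv hyv => ?_⟩
  refine D.isEarSequence.reachableAvoiding (fun _ => hD.of_mem_tail) (fun P hP hPtriv e he => ?_)
    (hcover ▸ Set.mem_univ x) (hcover ▸ Set.mem_univ y) hxv hyv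
  rw [edgeSet_fromEdgeSet]
  exact ⟨mem_nontrivialEdges.mpr ⟨P, hP, hPtriv, he⟩,
    G.not_isDiag_of_mem_edgeSet (P.walk.edges_subset_edgeSet he)⟩

theorem TwoVertexConnected.twelve_mul_card_nontrivialEdges_le {H : SimpleGraph V}
    (hH : TwoVertexConnected H) (hHG : H ≤ G) (hshort : D.ShortEarsNonadjacent)
    (hmin : D.evenEars = phi G) : 12 * D.nontrivialEdges.card ≤ 17 * H.edgeSet.ncard := by
  classical
  have := hH.finite
  have := hH.nontrivial
  have hcard := D.twelve_mul_card_nontrivialEdges_add_le (hH.preconnected.mono hHG)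
  have hphi := hH.card_add_phi_le hHG
  have hsum := hshort.sum_length_le hHG hH.two_le_ncard_incidenceSet
  lia

end SizeBound

theorem statement_12_general {V : Type*} [DecidableEq V] (G : SimpleGraph V)
    (h2 : TwoVertexConnected G) (D : EarDecomp G) (hopen : D.IsOpen)
    (hshort : D.ShortEarsNonadjacent) (hmin : D.evenEars = phi G) :
    SimpleGraph.fromEdgeSet (↑D.nontrivialEdges : Set (Sym2 V)) ≤ G ∧
    TwoVertexConnected (SimpleGraph.fromEdgeSet (↑D.nontrivialEdges : Set (Sym2 V))) ∧
    (D.nontrivialEdges.card : ℚ) ≤ 17/12 * (OPT2VC G : ℚ) := by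
  obtain ⟨H, hHG, hH, hopt⟩ := h2.exists_ncard_edgeSet_eq_OPT2VC
  have hbound : (12 * D.nontrivialEdges.card : ℚ) ≤ 17 * OPT2VC G := by
    exact_mod_cast hopt ▸ hH.twelve_mul_card_nontrivialEdges_le hHG hshort hmin
  refine ⟨D.fromEdgeSet_nontrivialEdges_le,
    hopen.twoVertexConnected_fromEdgeSet_nontrivialEdges h2, ?_⟩
  linarith

/-- Theorem 3. For an open nice ear-decomposition `D` with exactly
`φ(G)` even ears of a 2-vertex-connected graph `G` of minimum degree at least `3`, the
spanning subgraph `H` of `G` formed by the edges of the nontrivial ears of `D` is a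
2-vertex-connected spanning subgraph with `|E(H)| ≤ (17/12)·OPT_2VC(G)`. -/
theorem statement_12 {V : Type*} [Fintype V] [DecidableEq V] (G : SimpleGraph V)
    [DecidableRel G.Adj]
    (h2 : TwoVertexConnected G) (hdeg : ∀ v : V, 3 ≤ G.degree v)
    (D : EarDecomp G) (hnice : D.IsNice) (hmin : D.evenEars = phi G) :
    SimpleGraph.fromEdgeSet (↑D.nontrivialEdges : Set (Sym2 V)) ≤ G ∧
    TwoVertexConnected (SimpleGraph.fromEdgeSet (↑D.nontrivialEdges : Set (Sym2 V))) ∧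
    (D.nontrivialEdges.card : ℚ) ≤ 17/12 * (OPT2VC G : ℚ) := by
  exact statement_12_general G h2 D hnice.1 hnice.2.2 hmin
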